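/- arXiv:1202.4702 — 3 statements merged into one kernel-verified Lean document; each statement's English description precedes it below -/
import Mathlib

section
/- Let {U(t)}_{t∈[0,1]} be a norm-continuous family of unitary operators on a complex separable Hilbert space H such that U(t) − I is compact for all t ∈ [0,1]. Then there exist points 0 = t₀ < t₁ < ⋯ < t_n = 1 and angles θ₁, …, θ_n ∈ (0,2π) such that for each j = 1, …, n one has e^{iθ_j} ∉ σ(U(t)) for all t ∈ [t_{j−1}, t_j]. -/
open Complex Real

/-!
A compact operator has countable spectrum, hence so has each `U t = 1 + (U t - 1)`, and every arc
of the unit circle contains a point outside `σ (U t)`. Membership in the resolvent set is an open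
condition on the operator, so by norm continuity this point remains outside the spectrum for all
parameters near `t`. The Lebesgue number lemma on the compact parameter interval then provides a
uniform partition.
-/

open Filter Set Topology Module End

theorem strictMono_span_image_Iio {R M : Type*} [Semiring R] [Nontrivial R] [AddCommMonoid M]
    [Module R M] {ι : Type*} [Preorder ι] {v : ι → M} (hv : LinearIndependent R v) :
    StrictMono fun i ↦ Submodule.span R (v '' Iio i) := by
  intro i j hij
  exact SetLike.lt_iff_le_and_exists.2
    ⟨Submodule.span_mono (image_mono (Iio_subset_Iio hij.le)), v i,
      Submodule.subset_span ⟨i, hij, rfl⟩, hv.notMem_span_image (by simp)⟩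

theorem apply_sub_smul_mem_span_image_Iio {R M : Type*} [CommRing R] [AddCommGroup M] [Module R M]
    {ι : Type*} [PartialOrder ι] {f : End R M} {μ : ι → R} {v : ι → M}
    (hv : ∀ i, f (v i) = μ i • v i) (i : ι) {x : M} (hx : x ∈ Submodule.span R (v '' Iic i)) :
    f x - μ i • x ∈ Submodule.span R (v '' Iio i) := by
  suffices Submodule.span R (v '' Iic i) ≤
      (Submodule.span R (v '' Iio i)).comap (f - μ i • 1) from this hx
  rw [Submodule.span_le]
  rintro _ ⟨k, hk, rfl⟩
  have hvk : (f - μ i • 1) (v k) = (μ k - μ i) • v k := by simp [hv, sub_smul]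
  rw [SetLike.mem_coe, Submodule.mem_comap, hvk]
  obtain hki | rfl := (mem_Iic.1 hk).lt_or_eq
  · exact Submodule.smul_mem _ _ (Submodule.subset_span ⟨k, hki, rfl⟩)
  · simp

section CompactOperator

variable {𝕜 X : Type*} [NontriviallyNormedField 𝕜] [NormedAddCommGroup X] [NormedSpace 𝕜 X]
  {T : X →L[𝕜] X}

theorem exists_lt_norm_sub_lt_of_isCompactOperator (hT : IsCompactOperator T) {y : ℕ → X} {R : ℝ}
    (hy : ∀ n, ‖y n‖ ≤ R) {ε : ℝ} (hε : 0 < ε) :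
    ∃ m n, m < n ∧ ‖T (y n) - T (y m)‖ < ε := by
  obtain ⟨K, hK, hTK⟩ := hT.image_closedBall_subset_compact R
  have hTy : ∀ n, T (y n) ∈ K := fun n ↦ hTK ⟨y n, by simpa using hy n, rfl⟩
  obtain ⟨_, -, φ, hφ, hlim⟩ := hK.tendsto_subseq hTy
  obtain ⟨N, hN⟩ := Metric.cauchySeq_iff'.1 hlim.cauchySeq ε hε
  refine ⟨φ N, φ (N + 1), hφ N.lt_succ_self, ?_⟩
  simpa only [Function.comp_apply, dist_eq_norm] using hN (N + 1) N.le_succ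

theorem exists_bounded_seq_one_le_norm_sub_of_strictMono {V : ℕ → Submodule 𝕜 X}
    (hV : StrictMono V) (hclosed : ∀ n, IsClosed (V n : Set X)) :
    ∃ (R : ℝ) (y : ℕ → X), ∀ n, ‖y n‖ ≤ R ∧ y n ∈ V (n + 1) ∧ ∀ z ∈ V n, 1 ≤ ‖y n - z‖ := by
  obtain ⟨c, hc⟩ := NormedField.exists_one_lt_norm 𝕜
  have riesz (n : ℕ) :
      ∃ y : X, ‖y‖ ≤ ‖c‖ + 1 ∧ y ∈ V (n + 1) ∧ ∀ z ∈ V n, 1 ≤ ‖y - z‖ := by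
    have hclosed' : IsClosed ((V n).comap (V (n + 1)).subtype : Set (V (n + 1))) :=
      (hclosed n).preimage continuous_subtype_val
    obtain ⟨x, hx, hxn⟩ := SetLike.exists_of_lt (hV n.lt_succ_self)
    obtain ⟨y, hyR, hy⟩ := riesz_lemma_of_norm_lt hc (lt_add_one ‖c‖) hclosed' ⟨⟨x, hx⟩, hxn⟩
    exact ⟨y, hyR, y.2, fun z hz ↦ hy ⟨z, hV.monotone n.le_succ hz⟩ hz⟩
  choose y hy using riesz
  exact ⟨‖c‖ + 1, y, hy⟩

-- For `m < n` the Riesz vectors `y` of the flag satisfy `T (y n) - T (y m) = μ n • (y n - z)` with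
-- `z ∈ V n`, so their images under `T` are `ε`-separated.
theorem not_isCompactOperator_of_sub_smul_mem_of_strictMono {V : ℕ → Submodule 𝕜 X}
    (hV : StrictMono V) (hclosed : ∀ n, IsClosed (V n : Set X)) {μ : ℕ → 𝕜} {ε : ℝ} (hε : 0 < ε)
    (hμ : ∀ n, ε ≤ ‖μ n‖) (hTV : ∀ n, ∀ x ∈ V (n + 1), T x - μ n • x ∈ V n) :
    ¬ IsCompactOperator T := by
  intro hT
  obtain ⟨R, y, hy⟩ := exists_bounded_seq_one_le_norm_sub_of_strictMono hV hclosed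
  obtain ⟨m, n, hmn, hlt⟩ :=
    exists_lt_norm_sub_lt_of_isCompactOperator hT (fun n ↦ (hy n).1) hε
  have hμn : μ n ≠ 0 := norm_pos_iff.1 (hε.trans_le (hμ n))
  have hTym : T (y m) ∈ V n := by
    have : T (y m) ∈ V (m + 1) := by
      rw [← sub_add_cancel (T (y m)) (μ m • y m)]
      exact add_mem (hV.monotone m.le_succ (hTV m _ (hy m).2.1))
        (Submodule.smul_mem _ _ (hy m).2.1)
    exact hV.monotone hmn this
  set w : X := T (y m) - (T (y n) - μ n • y n) with hw
  have hwV : w ∈ V n := sub_mem hTym (hTV n _ (hy n).2.1)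
  refine hlt.not_ge ?_
  calc
    ε ≤ ‖μ n‖ * ‖y n - (μ n)⁻¹ • w‖ :=
      (hμ n).trans <| le_mul_of_one_le_right (norm_nonneg _) <|
        (hy n).2.2 _ (Submodule.smul_mem _ _ hwV)
    _ = ‖T (y n) - T (y m)‖ := by
      rw [← norm_smul, smul_sub, smul_inv_smul₀ hμn, hw]
      congr 1
      abel

variable [CompleteSpace 𝕜]

theorem finite_hasEigenvalue_le_norm_of_isCompactOperator (hT : IsCompactOperator T)
    {ε : ℝ} (hε : 0 < ε) : {μ : 𝕜 | HasEigenvalue (T : End 𝕜 X) μ ∧ ε ≤ ‖μ‖}.Finite := by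
  by_contra hinf
  let μ := Set.Infinite.natEmbedding _ hinf
  choose v hv using fun n ↦ (μ n).2.1.exists_hasEigenvector
  have hindep : LinearIndependent 𝕜 v :=
    eigenvectors_linearIndependent' _ _ (Subtype.val_injective.comp μ.injective) v hv
  have hclosed (n : ℕ) : IsClosed (Submodule.span 𝕜 (v '' Iio n) : Set X) :=
    have := FiniteDimensional.span_of_finite 𝕜 ((finite_Iio n).image v)
    Submodule.closed_of_finiteDimensional _
  refine not_isCompactOperator_of_sub_smul_mem_of_strictMono (strictMono_span_image_Iio hindep)
    hclosed hε (fun n ↦ (μ n).2.2) (fun n x hx ↦ ?_) hT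
  rw [Set.Iio_add_one_eq_Iic] at hx
  exact apply_sub_smul_mem_span_image_Iio (fun k ↦ (hv k).apply_eq_smul) n hx

theorem countable_spectrum_of_isCompactOperator [CompleteSpace X] (hT : IsCompactOperator T) :
    (spectrum 𝕜 T).Countable := by
  have hcover : spectrum 𝕜 T ⊆
      {0} ∪ ⋃ k : ℕ, {μ | HasEigenvalue (T : End 𝕜 X) μ ∧ 1 / (k + 1 : ℝ) ≤ ‖μ‖} := by
    intro μ hμ
    obtain rfl | hμ0 := eq_or_ne μ 0
    · exact .inl rfl
    · obtain ⟨k, hk⟩ := exists_nat_one_div_lt (norm_pos_iff.2 hμ0)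
      exact .inr (mem_iUnion.2 ⟨k, (hT.hasEigenvalue_iff_mem_spectrum hμ0).2 hμ, hk.le⟩)
  exact ((countable_singleton 0).union <| countable_iUnion fun k ↦
    (finite_hasEigenvalue_le_norm_of_isCompactOperator hT (by positivity)).countable).mono hcover

theorem countable_spectrum_of_isCompactOperator_sub_one [CompleteSpace X]
    (hT : IsCompactOperator ⇑(T - 1)) : (spectrum 𝕜 T).Countable := by
  have hspec : spectrum 𝕜 T = (1 + ·) '' spectrum 𝕜 (T - 1) := by
    rw [← singleton_add, spectrum.singleton_add_eq, map_one, add_sub_cancel]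
  rw [hspec]
  exact (countable_spectrum_of_isCompactOperator hT).image _

end CompactOperator

theorem eventually_notMem_spectrum {𝕜 A : Type*} [CommSemiring 𝕜] [NormedRing A]
    [HasSummableGeomSeries A] [Algebra 𝕜 A] {a : A} {μ : 𝕜} (hμ : μ ∉ spectrum 𝕜 a) :
    ∀ᶠ b in 𝓝 a, μ ∉ spectrum 𝕜 b := by
  simp only [spectrum.notMem_iff] at hμ ⊢
  exact (continuous_const.sub continuous_id).continuousAt.eventually_mem
    (Units.isOpen.mem_nhds hμ)

theorem exists_mem_Ioo_exp_mul_I_notMem {S : Set ℂ} (hS : S.Countable) {α β : ℝ} (hαβ : α < β) :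
    ∃ θ ∈ Ioo α β, Complex.exp (θ * I) ∉ S := by
  have hinj : Function.Injective fun θ : ℝ ↦ (θ : ℂ) * I :=
    (mul_left_injective₀ I_ne_zero).comp ofReal_injective
  have hcount : {θ : ℝ | Complex.exp (θ * I) ∈ S}.Countable :=
    hS.preimage_cexp.preimage hinj
  obtain ⟨θ, hθ, hmem⟩ := (hcount.dense_compl ℝ).exists_between hαβ
  exact ⟨θ, hmem, hθ⟩

theorem exists_strictMono_partition_sub_lt {a b δ : ℝ} (hab : a < b) (hδ : 0 < δ) :
    ∃ (n : ℕ) (t : Fin (n + 1) → ℝ), StrictMono t ∧ t 0 = a ∧ t (Fin.last n) = b ∧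
      ∀ j : Fin n, t j.succ - t j.castSucc < δ := by
  obtain ⟨m, hm⟩ := exists_nat_one_div_lt (div_pos hδ (sub_pos.2 hab))
  have hstep : 0 < (b - a) / (m + 1) := div_pos (sub_pos.2 hab) (by positivity)
  refine ⟨m + 1, fun j ↦ a + j * ((b - a) / (m + 1)), fun i j hij ↦ ?_, by simp, ?_, fun j ↦ ?_⟩
  · dsimp only
    gcongr
    exact hij
  · simp only [Fin.val_last, Nat.cast_add, Nat.cast_one]
    field_simp
    ring
  · have hlt : (b - a) / (m + 1) < δ := by
      rwa [lt_div_iff₀ (sub_pos.2 hab), one_div_mul_eq_div] at hm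
    simp only [Fin.val_succ, Fin.val_castSucc, Nat.cast_add, Nat.cast_one]
    linarith

theorem exists_partition_forall_Icc_of_eventually {ι : Type*} {a b : ℝ} (hab : a < b)
    {p : ι → ℝ → Prop} (hp : ∀ t ∈ Icc a b, ∃ i, ∀ᶠ s in 𝓝[Icc a b] t, p i s) :
    ∃ (n : ℕ) (t : Fin (n + 1) → ℝ) (i : Fin n → ι),
      StrictMono t ∧ t 0 = a ∧ t (Fin.last n) = b ∧
      ∀ j : Fin n, ∀ s ∈ Icc (t j.castSucc) (t j.succ), p (i j) s := by
  choose i hi using hp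
  obtain ⟨δ, hδ, hball⟩ := Metric.uniformity_basis_dist.lebesgue_number_lemma_nhdsWithin'
    isCompact_Icc (U := fun t ht ↦ {s | p (i t ht) s}) hi
  obtain ⟨n, t, hmono, h0, hlast, hmesh⟩ := exists_strictMono_partition_sub_lt hab hδ
  have hmem (j : Fin (n + 1)) : t j ∈ Icc a b :=
    ⟨h0 ▸ hmono.monotone j.zero_le, hlast ▸ hmono.monotone j.le_last⟩
  choose c hc using fun j ↦ hball (t j) (hmem j)
  refine ⟨n, t, fun j ↦ i (c j.castSucc) (c j.castSucc).2, hmono, h0, hlast, fun j s hs ↦ ?_⟩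
  refine hc j.castSucc ⟨?_, (hmem j.castSucc).1.trans hs.1, hs.2.trans (hmem j.succ).2⟩
  change dist (t j.castSucc) s < δ
  rw [dist_comm, Real.dist_eq, abs_of_nonneg (sub_nonneg.2 hs.1)]
  linarith [hs.2, hmesh j]

theorem exists_partition_avoiding_spectrum_of_countable {A : Type*} [NormedRing A]
    [HasSummableGeomSeries A] [Algebra ℂ A] {u : ℝ → A} {a b : ℝ} (hab : a < b)
    (hu : ContinuousOn u (Icc a b)) (hcount : ∀ t ∈ Icc a b, (spectrum ℂ (u t)).Countable)
    {α β : ℝ} (hαβ : α < β) :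
    ∃ (n : ℕ) (t : Fin (n + 1) → ℝ) (θ : Fin n → ℝ),
      StrictMono t ∧ t 0 = a ∧ t (Fin.last n) = b ∧
      ∀ j : Fin n, θ j ∈ Ioo α β ∧
        ∀ s ∈ Icc (t j.castSucc) (t j.succ), Complex.exp (θ j * I) ∉ spectrum ℂ (u s) := by
  have hlocal : ∀ t ∈ Icc a b, ∃ θ : Ioo α β,
      ∀ᶠ s in 𝓝[Icc a b] t, Complex.exp ((θ : ℝ) * I) ∉ spectrum ℂ (u s) := by
    intro t ht
    obtain ⟨θ, hθ, hmem⟩ := exists_mem_Ioo_exp_mul_I_notMem (hcount t ht) hαβ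
    exact ⟨⟨θ, hθ⟩, (hu t ht).eventually (eventually_notMem_spectrum hmem)⟩
  obtain ⟨n, t, θ, hmono, h0, hlast, havoid⟩ :=
    exists_partition_forall_Icc_of_eventually hab hlocal
  exact ⟨n, t, fun j ↦ θ j, hmono, h0, hlast, fun j ↦ ⟨(θ j).2, havoid j⟩⟩

theorem exists_partition_avoiding_spectrum_general {E : Type*} [NormedAddCommGroup E]
    [NormedSpace ℂ E] [CompleteSpace E] {U : ℝ → E →L[ℂ] E} {a b : ℝ} (hab : a < b)
    (hUcont : ContinuousOn U (Icc a b))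
    (hUcpt : ∀ t ∈ Icc a b, IsCompactOperator ⇑(U t - 1)) {α β : ℝ} (hαβ : α < β) :
    ∃ (n : ℕ) (t : Fin (n + 1) → ℝ) (θ : Fin n → ℝ),
      StrictMono t ∧ t 0 = a ∧ t (Fin.last n) = b ∧
      ∀ j : Fin n, θ j ∈ Ioo α β ∧
        ∀ s ∈ Icc (t j.castSucc) (t j.succ), Complex.exp (θ j * I) ∉ spectrum ℂ (U s) :=
  exists_partition_avoiding_spectrum_of_countable hab hUcont
    (fun t ht ↦ countable_spectrum_of_isCompactOperator_sub_one (hUcpt t ht)) hαβ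

/-- For any norm-continuous family of unitaries `{U(t)}_{t∈[0,1]}` on a complex separable
Hilbert space with `U(t) - I` compact, there exist points `0 = t₀ < t₁ < ⋯ < tₙ = 1` and
angles `θ₁, …, θₙ ∈ (0,2π)` such that for each `j`, the point `e^{iθⱼ}` lies outside the
spectrum of `U(t)` for all `t ∈ [t_{j-1}, t_j]`. -/
theorem exists_partition_avoiding_spectrum
    {H : Type*} [NormedAddCommGroup H] [InnerProductSpace ℂ H] [CompleteSpace H]
    [TopologicalSpace.SeparableSpace H]
    (U : ℝ → H →L[ℂ] H)
    (hUcont : ContinuousOn U (Set.Icc 0 1))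
    (hUuni : ∀ t ∈ Set.Icc (0:ℝ) 1, U t ∈ unitary (H →L[ℂ] H))
    (hUcpt : ∀ t ∈ Set.Icc (0:ℝ) 1, IsCompactOperator ⇑(U t - 1)) :
    ∃ (n : ℕ) (t : Fin (n + 1) → ℝ) (θ : Fin n → ℝ),
      StrictMono t ∧ t 0 = 0 ∧ t (Fin.last n) = 1 ∧
      ∀ j : Fin n, θ j ∈ Set.Ioo 0 (2 * π) ∧
        ∀ s ∈ Set.Icc (t j.castSucc) (t j.succ),
          Complex.exp ((θ j : ℂ) * Complex.I) ∉ spectrum ℂ (U s) := by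
  exact exists_partition_avoiding_spectrum_general zero_lt_one hUcont hUcpt Real.two_pi_pos
end

section
/- Let A₁ and A₂ be bounded self-adjoint operators on a complex Hilbert space, and let λ ∈ ℝ be such that ε := dist(λ, σ(A₁)) > 0. Suppose that ‖(A₁ − (λ + iε))⁻¹ − (A₂ − (λ + iε))⁻¹‖ < 1/(2ε). Then λ ∉ σ(A₂). -/
open Complex

/-!
Let `R_a(z) = (z - a)⁻¹` and `c = z - w`. Then `w - b = (z - b) (1 - c R_b(z))`, so `w` lies in the
resolvent set of `b` as soon as `1 - c R_b(z)` is invertible. This element is a perturbation by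
`c (R_a(z) - R_b(z))` of `1 - c R_a(z)`, whose inverse is `1 + c R_a(w)`. The functional calculus
of `a` gives `‖R_a(w)‖ ≤ 1 / dist(w, σ(a))`, so that inverse has norm at most `2` when
`|c| ≤ dist(w, σ(a))`, and a Neumann series applies. For operators, `w = λ` and `z = λ + iε`.
-/

section Algebra

variable {R A : Type*} [CommRing R] [Ring A] [Algebra R A] {a : A} {z w : R}

lemma mem_resolventSet_iff_isUnit_one_sub_smul_resolvent (hz : z ∈ resolventSet R a) :
    w ∈ resolventSet R a ↔ IsUnit (1 - (z - w) • resolvent a z) := by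
  have factorization :
      algebraMap R A w - a = (algebraMap R A z - a) * (1 - (z - w) • resolvent a z) := by
    rw [mul_sub, mul_one, mul_smul_comm, resolvent, Ring.mul_inverse_cancel _ hz,
      ← Algebra.algebraMap_eq_smul_one, map_sub]
    abel
  rw [spectrum.mem_resolventSet_iff, factorization]
  exact hz.unit.isUnit_units_mul _

lemma resolvent_sub_resolvent_eq_smul_mul (hz : z ∈ resolventSet R a)
    (hw : w ∈ resolventSet R a) :
    resolvent a z - resolvent a w = (w - z) • (resolvent a z * resolvent a w) := by
  rw [resolvent, resolvent, Ring.inverse_sub_inverse (iff_of_true hz hw), sub_sub_sub_cancel_right,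
    ← map_sub, ← Algebra.commutes, mul_assoc, ← Algebra.smul_def]

lemma one_sub_smul_resolvent_mul_one_add_smul_resolvent (hz : z ∈ resolventSet R a)
    (hw : w ∈ resolventSet R a) :
    (1 - (z - w) • resolvent a z) * (1 + (z - w) • resolvent a w) = 1 := by
  have resolvent_identity := resolvent_sub_resolvent_eq_smul_mul hz hw
  calc (1 - (z - w) • resolvent a z) * (1 + (z - w) • resolvent a w)
    _ = 1 - (z - w) • ((resolvent a z - resolvent a w)
          - (w - z) • (resolvent a z * resolvent a w)) := by
      simp only [sub_mul, mul_add, one_mul, mul_one, smul_mul_smul_comm]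
      module
    _ = 1 := by rw [resolvent_identity, sub_self, smul_zero, sub_zero]

lemma ringInverse_neg (x : A) : Ring.inverse (-x) = -Ring.inverse x := by
  have inverse_neg_one : Ring.inverse (-1 : A) = -1 := by
    simpa only [Units.val_neg, Units.val_one, inv_neg, inv_one] using Ring.inverse_unit (-1 : Aˣ)
  rw [← mul_neg_one, Ring.inverse_mul (.inr isUnit_one.neg), inverse_neg_one, neg_one_mul]

lemma ringInverse_sub_smul_one (a : A) (z : R) :
    Ring.inverse (a - z • (1 : A)) = -resolvent a z := by
  rw [resolvent, ← ringInverse_neg, neg_sub, Algebra.algebraMap_eq_smul_one]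

end Algebra

lemma mem_resolventSet_of_norm_resolvent_sub_lt {𝕜 A : Type*} [NormedField 𝕜] [NormedRing A]
    [NormedAlgebra 𝕜 A] [HasSummableGeomSeries A] {a b : A} {z w : 𝕜}
    (hza : z ∈ resolventSet 𝕜 a) (hzb : z ∈ resolventSet 𝕜 b) (hwa : w ∈ resolventSet 𝕜 a)
    (h : ‖1 + (z - w) • resolvent a w‖ * (‖z - w‖ * ‖resolvent a z - resolvent b z‖) < 1) :
    w ∈ resolventSet 𝕜 b := by
  set U := 1 - (z - w) • resolvent a z with hU
  set V := 1 + (z - w) • resolvent a w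
  set D := (z - w) • (resolvent b z - resolvent a z) with hD
  have unit_U : IsUnit U := (mem_resolventSet_iff_isUnit_one_sub_smul_resolvent hza).1 hwa
  have unit_one_sub : IsUnit (1 - V * D) := by
    refine isUnit_one_sub_of_norm_lt_one ((norm_mul_le V D).trans_lt ?_)
    rwa [hD, norm_smul, norm_sub_rev (resolvent b z)]
  have factorization : 1 - (z - w) • resolvent b z = U * (1 - V * D) := by
    rw [mul_sub, mul_one, ← mul_assoc, one_sub_smul_resolvent_mul_one_add_smul_resolvent hza hwa,
      one_mul, hU, hD]
    module
  rw [mem_resolventSet_iff_isUnit_one_sub_smul_resolvent hzb, factorization]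
  exact unit_U.mul unit_one_sub

lemma cfc_inv_sub_eq_resolvent {𝕜 A : Type*} {p : A → Prop} [RCLike 𝕜] [Ring A] [StarRing A]
    [TopologicalSpace A] [Algebra 𝕜 A] [ContinuousFunctionalCalculus 𝕜 A p] {a : A} {w : 𝕜}
    (ha : p a) (hw : w ∈ resolventSet 𝕜 a) :
    cfc (fun x ↦ (w - x)⁻¹) a = resolvent a w := by
  have sub_ne_zero_on_spectrum : ∀ x ∈ spectrum 𝕜 a, w - x ≠ 0 := by
    rintro x hx h
    exact hx (sub_eq_zero.1 h ▸ hw)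
  rw [cfc_inv (fun x ↦ w - x) a sub_ne_zero_on_spectrum, cfc_sub (fun _ ↦ w) (fun x ↦ x) a,
    cfc_const w a, cfc_id' 𝕜 a, resolvent]

section IsometricFunctionalCalculus

variable {𝕜 A : Type*} {p : A → Prop} [RCLike 𝕜] [NormedRing A] [StarRing A] [NormedAlgebra 𝕜 A]
  [IsometricContinuousFunctionalCalculus 𝕜 A p] {a b : A} {z w : 𝕜}

lemma norm_resolvent_le_inv_infDist_spectrum (ha : p a) (hw : w ∈ resolventSet 𝕜 a) :
    ‖resolvent a w‖ ≤ (Metric.infDist w (spectrum 𝕜 a))⁻¹ := by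
  rw [← cfc_inv_sub_eq_resolvent ha hw]
  refine norm_cfc_le (inv_nonneg.2 Metric.infDist_nonneg) fun x hx ↦ ?_
  have infDist_pos : 0 < Metric.infDist w (spectrum 𝕜 a) :=
    ((ContinuousFunctionalCalculus.isCompact_spectrum (p := p) a).isClosed.notMem_iff_infDist_pos
      ⟨x, hx⟩).1 (not_not.2 hw)
  rw [norm_inv, ← dist_eq_norm]
  exact inv_anti₀ infDist_pos (Metric.infDist_le_dist_of_mem hx)

lemma norm_one_add_smul_resolvent_le (ha : p a) (hw : w ∈ resolventSet 𝕜 a) (c : 𝕜) :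
    ‖1 + c • resolvent a w‖ ≤ 1 + ‖c‖ / Metric.infDist w (spectrum 𝕜 a) := by
  have norm_one_le : ‖(1 : A)‖ ≤ 1 := by
    rw [← cfc_one 𝕜 a]
    exact norm_cfc_le zero_le_one fun _ _ ↦ norm_one.le
  calc ‖1 + c • resolvent a w‖
    _ ≤ ‖(1 : A)‖ + ‖c‖ * ‖resolvent a w‖ := (norm_add_le _ _).trans_eq (by rw [norm_smul])
    _ ≤ 1 + ‖c‖ / Metric.infDist w (spectrum 𝕜 a) := by
      rw [div_eq_mul_inv]
      gcongr
      exact norm_resolvent_le_inv_infDist_spectrum ha hw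

theorem not_mem_spectrum_of_resolvent_close_general [HasSummableGeomSeries A] (ha : p a)
    (hza : z ∈ resolventSet 𝕜 a) (hzb : z ∈ resolventSet 𝕜 b)
    (hpos : 0 < Metric.infDist w (spectrum 𝕜 a))
    (hzw : ‖z - w‖ ≤ Metric.infDist w (spectrum 𝕜 a))
    (hclose : ‖resolvent a z - resolvent b z‖ < 1 / (2 * Metric.infDist w (spectrum 𝕜 a))) :
    w ∉ spectrum 𝕜 b := by
  have hwa : w ∈ resolventSet 𝕜 a := by
    by_contra hw
    exact hpos.ne' (Metric.infDist_zero_of_mem hw)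
  set δ := Metric.infDist w (spectrum 𝕜 a)
  have norm_inverse_le : ‖1 + (z - w) • resolvent a w‖ ≤ 2 :=
    calc ‖1 + (z - w) • resolvent a w‖
      _ ≤ 1 + ‖z - w‖ / δ := norm_one_add_smul_resolvent_le ha hwa (z - w)
      _ ≤ 1 + 1 := by gcongr; exact div_le_one_of_le₀ hzw hpos.le
      _ = 2 := one_add_one_eq_two
  refine not_not.2 (mem_resolventSet_of_norm_resolvent_sub_lt hza hzb hwa ?_)
  calc ‖1 + (z - w) • resolvent a w‖ * (‖z - w‖ * ‖resolvent a z - resolvent b z‖)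
    _ ≤ 2 * (δ * ‖resolvent a z - resolvent b z‖) := by gcongr
    _ < 2 * (δ * (1 / (2 * δ))) := by gcongr
    _ = 1 := by field_simp

end IsometricFunctionalCalculus

lemma mem_resolventSet_of_isSelfAdjoint_of_im_ne_zero {A : Type*} [CStarAlgebra A] {a : A}
    (ha : IsSelfAdjoint a) {z : ℂ} (hz : z.im ≠ 0) : z ∈ resolventSet ℂ a := by
  by_contra h
  exact hz (ha.im_eq_zero_of_mem_spectrum h)

/-- If `A₁, A₂` are bounded self-adjoint operators, `λ ∈ ℝ`, `ε = dist(λ, σ(A₁)) > 0`, and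
`‖(A₁ - (λ+iε))⁻¹ - (A₂ - (λ+iε))⁻¹‖ < 1/(2ε)`, then `λ ∉ σ(A₂)`. -/
theorem not_mem_spectrum_of_resolvent_close
    {H : Type*} [NormedAddCommGroup H] [InnerProductSpace ℂ H] [CompleteSpace H]
    (A₁ A₂ : H →L[ℂ] H) (hA₁ : IsSelfAdjoint A₁) (hA₂ : IsSelfAdjoint A₂)
    (lam ε : ℝ)
    (hε : ε = Metric.infDist ((lam : ℂ)) (spectrum ℂ A₁))
    (hεpos : 0 < ε)
    (hclose : ‖Ring.inverse (A₁ - ((lam : ℂ) + (ε : ℂ) * Complex.I) • (1 : H →L[ℂ] H))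
        - Ring.inverse (A₂ - ((lam : ℂ) + (ε : ℂ) * Complex.I) • (1 : H →L[ℂ] H))‖
      < 1 / (2 * ε)) :
    (lam : ℂ) ∉ spectrum ℂ A₂ := by
  have im_ne_zero : ((lam : ℂ) + ε * I).im ≠ 0 := by simpa using hεpos.ne'
  have norm_shift : ‖(lam : ℂ) + ε * I - lam‖ = ε := by simp [abs_of_pos hεpos]
  rw [ringInverse_sub_smul_one, ringInverse_sub_smul_one, neg_sub_neg, norm_sub_rev] at hclose
  exact not_mem_spectrum_of_resolvent_close_general hA₁.isStarNormal
    (mem_resolventSet_of_isSelfAdjoint_of_im_ne_zero hA₁ im_ne_zero)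
    (mem_resolventSet_of_isSelfAdjoint_of_im_ne_zero hA₂ im_ne_zero)
    (hε ▸ hεpos) (norm_shift.trans hε).le (hε ▸ hclose)
end

section
/- Let A be a bounded self-adjoint operator on a complex Hilbert space with 0 ∉ σ(A), and set ε = dist(0, σ(A)) > 0. Then the operator (A − iε)⁻¹ + (iε)⁻¹ I is invertible and ‖((A − iε)⁻¹ + (iε)⁻¹ I)⁻¹‖ ≤ 2ε. -/
/-!
For `c` and `z` outside the spectrum of `a`, the combination `(a - c)⁻¹ - (z - c)⁻¹` is `f(a)` in
the continuous functional calculus, with `f x = (x - c)⁻¹ - (z - c)⁻¹`. Since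
`(f x)⁻¹ = -(z - c) - (z - c)² / (x - z)`, its inverse has norm at most `|z - c| + |z - c|² / d`,
where `d` is the distance from `z` to the spectrum. For `z = 0`, `c = iε` and `d = ε` this is `2ε`.
-/

open Complex

section Scalar

theorem inv_inv_sub_inv_eq {K : Type*} [Field K] {c x z : K} (hxc : x ≠ c) (hzc : z ≠ c)
    (hxz : x ≠ z) :
    ((x - c)⁻¹ - (z - c)⁻¹)⁻¹ = -(z - c) - (z - c) ^ 2 * (x - z)⁻¹ := by
  have x_sub_c : x - c ≠ 0 := sub_ne_zero.2 hxc
  have z_sub_c : z - c ≠ 0 := sub_ne_zero.2 hzc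
  have x_sub_z : x - z ≠ 0 := sub_ne_zero.2 hxz
  have z_sub_x : z - x ≠ 0 := sub_ne_zero.2 hxz.symm
  rw [inv_sub_inv x_sub_c z_sub_c, sub_sub_sub_cancel_right]
  field

theorem norm_inv_inv_sub_inv_le {K : Type*} [NormedField K] {c x z : K} (hxc : x ≠ c)
    (hzc : z ≠ c) (hxz : x ≠ z) :
    ‖((x - c)⁻¹ - (z - c)⁻¹)⁻¹‖ ≤ dist z c + dist z c ^ 2 / dist z x :=
  calc ‖((x - c)⁻¹ - (z - c)⁻¹)⁻¹‖ = ‖-(z - c) - (z - c) ^ 2 * (x - z)⁻¹‖ := by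
        rw [inv_inv_sub_inv_eq hxc hzc hxz]
    _ ≤ ‖-(z - c)‖ + ‖(z - c) ^ 2 * (x - z)⁻¹‖ := norm_sub_le _ _
    _ = dist z c + dist z c ^ 2 / dist z x := by
        rw [norm_neg, norm_mul, norm_pow, norm_inv, ← dist_eq_norm, ← dist_eq_norm,
          dist_comm x z, div_eq_mul_inv]

theorem continuousOn_inv_sub_const {K : Type*} [DivisionRing K] [TopologicalSpace K]
    [ContinuousSub K] [ContinuousInv₀ K] {s : Set K} {c : K} (hc : c ∉ s) :
    ContinuousOn (fun x ↦ (x - c)⁻¹) s :=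
  (continuous_id.sub continuous_const).continuousOn.inv₀ fun _ hx ↦
    sub_ne_zero.2 (ne_of_mem_of_not_mem hx hc)

end Scalar

section FunctionalCalculus

variable {𝕜 A : Type*} {p : A → Prop} [RCLike 𝕜]

theorem cfc_inv_sub_const_sub_const [Ring A] [StarRing A] [TopologicalSpace A] [Algebra 𝕜 A]
    [ContinuousFunctionalCalculus 𝕜 A p] {a : A} (ha : p a) {c : 𝕜} (hc : c ∉ spectrum 𝕜 a)
    (w : 𝕜) :
    cfc (fun x : 𝕜 ↦ (x - c)⁻¹ - w) a = Ring.inverse (a - c • (1 : A)) - w • (1 : A) := by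
  have sub_ne_zero_on : ∀ x ∈ spectrum 𝕜 a, x - c ≠ 0 := fun x hx ↦
    sub_ne_zero.2 (ne_of_mem_of_not_mem hx hc)
  rw [cfc_sub (fun x ↦ (x - c)⁻¹) (fun _ ↦ w) a (continuousOn_inv_sub_const hc),
    cfc_inv (· - c) a sub_ne_zero_on, cfc_sub (fun x ↦ x) (fun _ ↦ c) a, cfc_id' 𝕜 a,
    cfc_const c a, cfc_const w a, Algebra.algebraMap_eq_smul_one, Algebra.algebraMap_eq_smul_one]

theorem resolvent_combination_inverse_bound_general [NormedRing A] [StarRing A] [NormedAlgebra 𝕜 A]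
    [IsometricContinuousFunctionalCalculus 𝕜 A p] {a : A} (ha : p a) {c z : 𝕜}
    (hc : c ∉ spectrum 𝕜 a) (hz : z ∉ spectrum 𝕜 a) (hzc : z ≠ c) :
    IsUnit (Ring.inverse (a - c • (1 : A)) - (z - c)⁻¹ • (1 : A)) ∧
      ‖Ring.inverse (Ring.inverse (a - c • (1 : A)) - (z - c)⁻¹ • (1 : A))‖ ≤
        dist z c + dist z c ^ 2 / Metric.infDist z (spectrum 𝕜 a) := by
  let f : 𝕜 → 𝕜 := fun x ↦ (x - c)⁻¹ - (z - c)⁻¹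
  have f_cont : ContinuousOn f (spectrum 𝕜 a) :=
    (continuousOn_inv_sub_const hc).sub continuousOn_const
  have f_ne_zero : ∀ x ∈ spectrum 𝕜 a, f x ≠ 0 := fun x hx ↦
    sub_ne_zero.2 fun h ↦ ne_of_mem_of_not_mem hx hz (sub_left_injective (inv_injective h))
  rw [← cfc_inv_sub_const_sub_const ha hc]
  refine ⟨(isUnit_cfc_iff f a).2 f_ne_zero, ?_⟩
  rw [← cfc_inv f a f_ne_zero]
  refine norm_cfc_le (add_nonneg dist_nonneg (div_nonneg (sq_nonneg _) Metric.infDist_nonneg))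
    fun x hx ↦ ?_
  have infDist_pos : 0 < Metric.infDist z (spectrum 𝕜 a) :=
    ((ContinuousFunctionalCalculus.isCompact_spectrum a).isClosed.notMem_iff_infDist_pos
      ⟨x, hx⟩).1 hz
  calc ‖(f x)⁻¹‖ ≤ dist z c + dist z c ^ 2 / dist z x :=
        norm_inv_inv_sub_inv_le (ne_of_mem_of_not_mem hx hc) hzc (ne_of_mem_of_not_mem hx hz)
    _ ≤ dist z c + dist z c ^ 2 / Metric.infDist z (spectrum 𝕜 a) := by
        gcongr
        exact Metric.infDist_le_dist_of_mem hx

end FunctionalCalculus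

/-- Let `A` be a bounded self-adjoint operator on a complex Hilbert space with `0 ∉ σ(A)`,
and set `ε = dist(0, σ(A)) > 0`. Then `(A - iε)⁻¹ + (iε)⁻¹ I` is invertible and
`‖((A - iε)⁻¹ + (iε)⁻¹ I)⁻¹‖ ≤ 2ε`. -/
theorem resolvent_combination_inverse_bound
    {H : Type*} [NormedAddCommGroup H] [InnerProductSpace ℂ H] [CompleteSpace H]
    (A : H →L[ℂ] H) (hA : IsSelfAdjoint A)
    (h0 : (0 : ℂ) ∉ spectrum ℂ A)
    (ε : ℝ) (hε : ε = Metric.infDist (0 : ℂ) (spectrum ℂ A)) (hεpos : 0 < ε) :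
    IsUnit (Ring.inverse (A - ((ε : ℂ) * Complex.I) • (1 : H →L[ℂ] H))
        + ((ε : ℂ) * Complex.I)⁻¹ • (1 : H →L[ℂ] H))
    ∧ ‖Ring.inverse (Ring.inverse (A - ((ε : ℂ) * Complex.I) • (1 : H →L[ℂ] H))
        + ((ε : ℂ) * Complex.I)⁻¹ • (1 : H →L[ℂ] H))‖ ≤ 2 * ε := by
  have hc : ε * I ∉ spectrum ℂ A := fun h ↦
    hεpos.ne' (by simpa using hA.im_eq_zero_of_mem_spectrum h)
  simpa [← hε, abs_of_pos hεpos, sq, hεpos.ne', two_mul, sub_eq_add_neg] using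
    resolvent_combination_inverse_bound_general hA.isStarNormal hc h0 (by simp [hεpos.ne'])
end
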